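/- Let u ≤ w in S_n. The family of vectors (e_a − e_b) in ℝ^n, indexed by the pairs (a,b) ∈ E_w(u)^+, is linearly independent. -/

import Mathlib

open Equiv

/-- The length (number of inversions) of a permutation of `Fin n`. -/
def invLen {n : ℕ} (u : Equiv.Perm (Fin n)) : ℕ :=
  (Finset.univ.filter (fun p : Fin n × Fin n => p.1 < p.2 ∧ u p.2 < u p.1)).card

/-- A permutation is a transposition if it swaps two distinct elements. -/
def IsTransposition {n : ℕ} (σ : Equiv.Perm (Fin n)) : Prop :=
  ∃ a b : Fin n, a ≠ b ∧ σ = Equiv.swap a b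

/-- Bruhat order on permutations: `v ≤ w` iff `w` is obtained from `v` by left
multiplication by transpositions, each strictly increasing the length. -/
def BruhatLE {n : ℕ} (v w : Equiv.Perm (Fin n)) : Prop :=
  ∃ (m : ℕ) (c : ℕ → Equiv.Perm (Fin n)),
    c 0 = v ∧ c m = w ∧
    ∀ k, k < m →
      (∃ τ : Equiv.Perm (Fin n), IsTransposition τ ∧ c (k + 1) = τ * c k) ∧
      invLen (c k) < invLen (c (k + 1))

/-- The edge set `Ẽ_w(u)`. -/
def Etilde {n : ℕ} (w u : Equiv.Perm (Fin n)) : Set (Fin n × Fin n) :=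
  { p | ∃ i j : Fin n, i < j ∧ p = (u i, u j) ∧
      BruhatLE (Equiv.swap (u i) (u j) * u) w ∧
      |(invLen (Equiv.swap (u i) (u j) * u) : ℤ) - (invLen u : ℤ)| = 1 }

/-- The transitive reduction `E_w(u)` of `Ẽ_w(u)`: edges `(a,b)` of `Ẽ_w(u)` such that
there is no directed path from `a` to `b` in `Ẽ_w(u)` using at least two edges. -/
def Ered {n : ℕ} (w u : Equiv.Perm (Fin n)) : Set (Fin n × Fin n) :=
  { p | p ∈ Etilde w u ∧
      ¬ ∃ c : Fin n, (p.1, c) ∈ Etilde w u ∧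
        Relation.TransGen (fun a b : Fin n => (a, b) ∈ Etilde w u) c p.2 }

/-- `E_w(u)^+`: edges `(a,b)` of `E_w(u)` with `a < b`. -/
def Eplus {n : ℕ} (w u : Equiv.Perm (Fin n)) : Set (Fin n × Fin n) :=
  { p ∈ Ered w u | p.1 < p.2 }

/-- `E_w(u)^-`: edges `(a,b)` of `E_w(u)` with `a > b`. -/
def Eminus {n : ℕ} (w u : Equiv.Perm (Fin n)) : Set (Fin n × Fin n) :=
  { p ∈ Ered w u | p.2 < p.1 }

/-- The moment-map image `μ(u) = (u⁻¹(1), …, u⁻¹(n)) ∈ ℝⁿ`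
(using values `1, …, n`, i.e. `Fin.val + 1`). -/
def mu {n : ℕ} (u : Equiv.Perm (Fin n)) : Fin n → ℝ :=
  fun k => ((u⁻¹ k : ℕ) : ℝ) + 1

/-- The standard basis vector `e_a` of `ℝⁿ`. -/
def stdB {n : ℕ} (a : Fin n) : Fin n → ℝ :=
  fun k => if k = a then 1 else 0

/-!
Evaluating at the tails in increasing order shows that vectors `e_a - e_b` with `a < b` are linearly
independent as soon as distinct edges have distinct tails, so it suffices that no vertex is the tail
of two edges of `E_w(u)^+`. Suppose `u i → u j` and `u i → u k` are such edges with `i < j < k`.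
Exchanging two values of `u` changes the length by one plus twice the number of points of the graph
of `u` inside the rectangle spanned by the two exchanged points, so for an edge this rectangle is
empty. In particular `(j, u j)` is not inside the rectangle of the edge `u i → u k`; hence
`u k < u j`. The inversion `(j, k)` refines to a chain of inversions whose rectangles are empty.
Their transpositions lower the length of `u ≤ w`, so they are edges of `Ẽ_w(u)` and give a path from
`u j` to `u k`. The edge `u i → u k` is therefore bypassed through `u j` and does not survive the
transitive reduction.
-/

theorem linearIndependent_single_sub_single {ι α R : Type*} [Ring R] [Preorder α] [DecidableEq α]
    {s t : ι → α} (hs : Function.Injective s) (hst : ∀ p, s p < t p) :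
    LinearIndependent R (fun p => (Pi.single (s p) 1 - Pi.single (t p) 1 : α → R)) := by
  rw [linearIndependent_iff]
  intro l hl
  by_contra hne
  obtain ⟨p, hp, hmin⟩ := l.support.exists_minimalFor s (Finsupp.support_nonempty_iff.2 hne)
  have hother : ∀ q ∈ l.support, q ≠ p →
      (Pi.single (s q) 1 - Pi.single (t q) 1 : α → R) (s p) = 0 := by
    intro q hq hqp
    have htail : s p ≠ s q := fun h => hqp (hs h.symm)
    have hhead : s p ≠ t q := fun h => (hst q).not_ge (h ▸ hmin hq (h ▸ (hst q).le))
    simp [htail, hhead]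
  have hcoeff : l p = 0 := by
    have hsum := congrFun hl (s p)
    rw [Finsupp.linearCombination_apply, Finsupp.sum, Finset.sum_apply,
      Finset.sum_eq_single_of_mem p hp fun q hq hqp => by
        rw [Pi.smul_apply, hother q hq hqp, smul_zero]] at hsum
    simpa [(hst p).ne] using hsum
  exact Finsupp.mem_support_iff.1 hp hcoeff

section

variable {n : ℕ} {u v w : Perm (Fin n)} {a b : Fin n} {i j k : Fin n}

/-- The inversion set of `u`, as pairs of positions. -/
def inversions (u : Perm (Fin n)) : Finset (Fin n × Fin n) :=
  {p | p.1 < p.2 ∧ u p.2 < u p.1}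

theorem mem_inversions {p : Fin n × Fin n} : p ∈ inversions u ↔ p.1 < p.2 ∧ u p.2 < u p.1 := by
  simp [inversions]

theorem card_inversions (u : Perm (Fin n)) : (inversions u).card = invLen u := rfl

/-- The positions `k` for which `(k, u k)` is interior to the rectangle with opposite corners
`(i, u i)` and `(j, u j)`, where `i < j`. One of the two intervals of values is empty, so the notion
does not depend on whether `u` ascends or descends from `i` to `j`. -/
def between (u : Perm (Fin n)) (i j : Fin n) : Finset (Fin n) :=
  {k ∈ Finset.Ioo i j | u k ∈ Finset.Ioo (u i) (u j) ∪ Finset.Ioo (u j) (u i)}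

theorem between_mul_swap (u : Perm (Fin n)) (i j : Fin n) :
    between (u * swap i j) i j = between u i j := by
  ext k
  simp only [between, Finset.mem_filter, Finset.mem_Ioo, Finset.mem_union, Perm.mul_apply,
    swap_apply_left, swap_apply_right]
  refine and_congr_right fun hk => ?_
  rw [swap_apply_of_ne_of_ne hk.1.ne' hk.2.ne, or_comm]

/-- The pairs consisting of one of `i`, `j` and a position strictly between them, in either order.
Apart from `(i, j)` and `(j, i)`, these are the pairs of distinct positions whose order is reversed
by applying `swap i j` to both entries. -/
def crossPairs (i j : Fin n) : Finset (Fin n × Fin n) :=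
  {i, j} ×ˢ Finset.Ioo i j ∪ Finset.Ioo i j ×ˢ {i, j}

theorem mem_crossPairs {p : Fin n × Fin n} :
    p ∈ crossPairs i j ↔
      (p.1 = i ∨ p.1 = j) ∧ i < p.2 ∧ p.2 < j ∨ (i < p.1 ∧ p.1 < j) ∧ (p.2 = i ∨ p.2 = j) := by
  simp [crossPairs]

/-- The bijection on pairs of positions that embeds the inversions of `u` into those of
`u * swap i j` when `i < j` and `u i < u j`. It leaves `crossPairs i j` alone because there applying
`swap i j` would turn an inversion of `u` into a pair in the wrong order. -/
def swapPair (i j : Fin n) (p : Fin n × Fin n) : Fin n × Fin n :=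
  if p ∈ crossPairs i j then p else (swap i j p.1, swap i j p.2)

theorem swapPair_involutive (i j : Fin n) : Function.Involutive (swapPair i j) := by
  rintro ⟨p, q⟩
  simp only [swapPair, mem_crossPairs, swap_apply_def]
  grind

theorem mem_image_swapPair {s : Finset (Fin n × Fin n)} {p : Fin n × Fin n} :
    p ∈ s.image (swapPair i j) ↔ swapPair i j p ∈ s := by
  refine ⟨fun hp => ?_, fun hp => Finset.mem_image.2 ⟨_, hp, swapPair_involutive i j p⟩⟩
  obtain ⟨q, hq, rfl⟩ := Finset.mem_image.1 hp
  rwa [swapPair_involutive i j q]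

/-- The inversions in `crossPairs i j` that `u * swap i j` has in addition to those of `u`, when
`i < j` and `u i < u j`. -/
def gainedInversions (u : Perm (Fin n)) (i j : Fin n) : Finset (Fin n × Fin n) :=
  {i} ×ˢ between u i j ∪ between u i j ×ˢ {j}

theorem mem_gainedInversions (hu : u i < u j) {p : Fin n × Fin n} :
    p ∈ gainedInversions u i j ↔
      p.1 = i ∧ (i < p.2 ∧ p.2 < j) ∧ u i < u p.2 ∧ u p.2 < u j ∨
      ((i < p.1 ∧ p.1 < j) ∧ u i < u p.1 ∧ u p.1 < u j) ∧ p.2 = j := by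
  simp only [gainedInversions, between, Finset.Ioo_eq_empty hu.not_gt, Finset.union_empty,
    Finset.mem_union, Finset.mem_product, Finset.mem_singleton, Finset.mem_filter, Finset.mem_Ioo]

theorem gainedInversions_subset_crossPairs : gainedInversions u i j ⊆ crossPairs i j :=
  Finset.union_subset_union
    (Finset.product_subset_product (by simp) (Finset.filter_subset _ _))
    (Finset.product_subset_product (Finset.filter_subset _ _) (by simp))

theorem card_gainedInversions (u : Perm (Fin n)) (i j : Fin n) :
    (gainedInversions u i j).card = 2 * (between u i j).card := by
  have hdisj : Disjoint ({i} ×ˢ between u i j) (between u i j ×ˢ {j}) :=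
    Finset.disjoint_product.2 (.inl (by simp [between]))
  rw [gainedInversions, Finset.card_union_of_disjoint hdisj, Finset.card_product,
    Finset.card_product, Finset.card_singleton, Finset.card_singleton]
  ring

theorem mem_inversions_mul_swap_of_mem_crossPairs (hij : i < j) (hu : u i < u j)
    {p : Fin n × Fin n} (hp : p ∈ crossPairs i j) :
    p ∈ inversions (u * swap i j) ↔ p ∈ inversions u ∨ p ∈ gainedInversions u i j := by
  obtain ⟨p, q⟩ := p
  have hinj : ∀ a b, u a = u b → a = b := u.injective
  simp only [mem_inversions, mem_gainedInversions hu, Perm.mul_apply, swap_apply_def]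
  rcases mem_crossPairs.1 hp with ⟨rfl | rfl, hq⟩ | ⟨hp, rfl | rfl⟩ <;> grind

theorem mem_inversions_mul_swap_of_notMem_crossPairs (hij : i < j) (hu : u i < u j)
    {p : Fin n × Fin n} (hp : p ∉ crossPairs i j) :
    p ∈ inversions (u * swap i j) ↔ p = (i, j) ∨ (swap i j p.1, swap i j p.2) ∈ inversions u := by
  obtain ⟨p, q⟩ := p
  simp only [mem_crossPairs] at hp
  simp only [mem_inversions, Perm.mul_apply, swap_apply_def, Prod.mk.injEq]
  grind

theorem inversions_mul_swap (hij : i < j) (hu : u i < u j) :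
    inversions (u * swap i j) =
      insert (i, j) ((inversions u).image (swapPair i j) ∪ gainedInversions u i j) := by
  ext p
  rw [Finset.mem_insert, Finset.mem_union, mem_image_swapPair, swapPair]
  split_ifs with hp
  · have hne : p ≠ (i, j) := by
      rintro rfl
      simp [mem_crossPairs] at hp
    simp only [mem_inversions_mul_swap_of_mem_crossPairs hij hu hp, hne, false_or]
  · have hgained : p ∉ gainedInversions u i j := fun h => hp (gainedInversions_subset_crossPairs h)
    simp only [mem_inversions_mul_swap_of_notMem_crossPairs hij hu hp, hgained, or_false]

theorem invLen_mul_swap (hij : i < j) (hu : u i < u j) :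
    invLen (u * swap i j) = invLen u + 2 * (between u i j).card + 1 := by
  have hdisj : Disjoint ((inversions u).image (swapPair i j)) (gainedInversions u i j) := by
    rw [Finset.disjoint_right]
    intro p hp
    rw [mem_image_swapPair, swapPair, if_pos (gainedInversions_subset_crossPairs hp),
      mem_inversions]
    rw [mem_gainedInversions hu] at hp
    grind
  have hnotMem : (i, j) ∉ (inversions u).image (swapPair i j) ∪ gainedInversions u i j := by
    rw [Finset.mem_union, mem_image_swapPair, mem_gainedInversions hu]
    simp [swapPair, mem_crossPairs, mem_inversions, hij.not_gt]
  rw [← card_inversions, inversions_mul_swap hij hu, Finset.card_insert_of_notMem hnotMem,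
    Finset.card_union_of_disjoint hdisj,
    Finset.card_image_of_injective _ (swapPair_involutive i j).injective, card_gainedInversions,
    card_inversions]

theorem invLen_eq_of_apply_lt (hij : i < j) (hu : u j < u i) :
    invLen u = invLen (u * swap i j) + 2 * (between u i j).card + 1 := by
  have hswap := invLen_mul_swap (u := u * swap i j) hij (by simpa using hu)
  rwa [mul_swap_mul_self, between_mul_swap] at hswap

theorem abs_invLen_sub_eq_one_iff (hij : i < j) :
    |(invLen (swap (u i) (u j) * u) : ℤ) - invLen u| = 1 ↔ between u i j = ∅ := by
  rw [← mul_swap_eq_swap_mul, ← Finset.card_eq_zero]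
  rcases lt_or_gt_of_ne (u.injective.ne hij.ne) with hu | hu
  · have := invLen_mul_swap hij hu
    grind
  · have := invLen_eq_of_apply_lt hij hu
    grind

theorem BruhatLE.of_swap_mul (hlt : invLen v < invLen (swap a b * v))
    (hle : BruhatLE (swap a b * v) w) : BruhatLE v w := by
  have hab : a ≠ b := by
    rintro rfl
    simp [← Perm.one_def] at hlt
  obtain ⟨m, c, hc0, hcm, hstep⟩ := hle
  refine ⟨m + 1, fun k => Nat.casesOn k v c, rfl, hcm, ?_⟩
  rintro (_ | k) hk
  · exact ⟨⟨swap a b, ⟨a, b, hab, rfl⟩, hc0⟩, hlt.trans_eq (congrArg invLen hc0.symm)⟩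
  · exact hstep k (Nat.lt_of_succ_lt_succ hk)

theorem apply_mem_Etilde_iff :
    (u i, u j) ∈ Etilde w u ↔
      i < j ∧ BruhatLE (swap (u i) (u j) * u) w ∧ between u i j = ∅ := by
  constructor
  · rintro ⟨i', j', hij, heq, hle, hlen⟩
    simp only [Prod.mk.injEq, EmbeddingLike.apply_eq_iff_eq] at heq
    obtain ⟨rfl, rfl⟩ := heq
    exact ⟨hij, hle, (abs_invLen_sub_eq_one_iff hij).1 hlen⟩
  · rintro ⟨hij, hle, hempty⟩
    exact ⟨i, j, hij, rfl, hle, (abs_invLen_sub_eq_one_iff hij).2 hempty⟩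

theorem apply_mem_Etilde_of_apply_lt (hle : BruhatLE u w) (hij : i < j) (hu : u j < u i)
    (hempty : between u i j = ∅) : (u i, u j) ∈ Etilde w u := by
  refine apply_mem_Etilde_iff.2 ⟨hij, .of_swap_mul (a := u i) (b := u j) ?_ ?_, hempty⟩
  · rw [swap_mul_self_mul, ← mul_swap_eq_swap_mul]
    have := invLen_eq_of_apply_lt hij hu
    omega
  · rwa [swap_mul_self_mul]

theorem transGen_Etilde_of_apply_lt {i j : Fin n} (hle : BruhatLE u w) (hij : i < j)
    (hu : u j < u i) :
    Relation.TransGen (fun a b => (a, b) ∈ Etilde w u) (u i) (u j) := by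
  rcases (between u i j).eq_empty_or_nonempty with hempty | ⟨k, hk⟩
  · exact .single (apply_mem_Etilde_of_apply_lt hle hij hu hempty)
  · obtain ⟨⟨hik, hkj⟩, hjk, hki⟩ : (i < k ∧ k < j) ∧ u j < u k ∧ u k < u i := by
      simpa [between, hu.not_gt, hu.asymm] using hk
    exact (transGen_Etilde_of_apply_lt hle hik hki).trans
      (transGen_Etilde_of_apply_lt hle hkj hjk)
termination_by (j - i : ℕ)

theorem apply_notMem_Ered (hle : BruhatLE u w) (hij : (u i, u j) ∈ Etilde w u) (hjk : j < k)
    (hu : u k < u j) : (u i, u k) ∉ Ered w u :=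
  fun hik => hik.2 ⟨u j, hij, transGen_Etilde_of_apply_lt hle hjk hu⟩

theorem apply_notMem_Eplus (hle : BruhatLE u w) (hij : (u i, u j) ∈ Eplus w u) (hjk : j < k) :
    (u i, u k) ∉ Eplus w u := by
  intro hik
  have hempty : between u i k = ∅ := (apply_mem_Etilde_iff.1 hik.1.1).2.2
  have hij_lt : i < j := (apply_mem_Etilde_iff.1 hij.1.1).1
  have huij : u i < u j := hij.2
  rcases lt_or_gt_of_ne (u.injective.ne hjk.ne) with hu | hu
  · have hj : j ∈ between u i k := by simp [between, hij_lt, hjk, huij, hu]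
    simp [hempty] at hj
  · exact apply_notMem_Ered hle hij.1.1 hjk hu hik.1

theorem Eplus_injOn_fst (hle : BruhatLE u w) : Set.InjOn Prod.fst (Eplus w u) := by
  rintro ⟨a, b⟩ hab ⟨_, c⟩ hac rfl
  obtain ⟨i, rfl⟩ := u.surjective a
  obtain ⟨j, rfl⟩ := u.surjective b
  obtain ⟨k, rfl⟩ := u.surjective c
  rcases lt_trichotomy j k with hjk | rfl | hkj
  · exact absurd hac (apply_notMem_Eplus hle hab hjk)
  · rfl
  · exact absurd hab (apply_notMem_Eplus hle hac hkj)

theorem stdB_eq_single (a : Fin n) : stdB a = Pi.single a 1 := by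
  ext k
  simp [stdB, Pi.single_apply]

theorem stmt4_general {R : Type*} [Ring R] (hle : BruhatLE u w) :
    LinearIndependent R
      (fun p : Eplus w u => (Pi.single p.1.1 1 - Pi.single p.1.2 1 : Fin n → R)) :=
  linearIndependent_single_sub_single (Eplus_injOn_fst hle).injective fun p => p.2.2

end

theorem stmt4 {n : ℕ} (hn : 1 ≤ n) (w u : Equiv.Perm (Fin n)) (hle : BruhatLE u w) :
    LinearIndependent ℝ (fun p : Eplus w u => stdB p.1.1 - stdB p.1.2) := by
  simpa only [stdB_eq_single] using stmt4_general hle
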